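/- There exist ε > 0, δ ∈ (θ/2, 1/2 − θ), a subset S' ⊆ S of density 1 in S, and constants C > 0, λ₀ > 0, such that for every n_k ∈ S' with n_k ≥ λ₀, every λ ∈ (n_k, n_{k+1}), every ζ ∈ ℤ²∖{0} with |ζ| ≤ λ^ε, and every ξ ∈ A(n_k, n_k^δ), one has |4π²|ξ+ζ|² − λ| ≥ C^{−1} · n_k^δ, i.e. |c_λ(ξ+ζ)| ≤ C · n_k^{−δ}. -/

import Mathlib

open Real MeasureTheory Filter Finset

noncomputable section

/-- `m` is a sum of two integer squares. -/
def IsSum2Sq (m : ℕ) : Prop := ∃ a b : ℤ, (m : ℤ) = a ^ 2 + b ^ 2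

/-- The increasing enumeration `n₀ < n₁ < ⋯` of `S = {4π²m : m a sum of two squares}`. -/
noncomputable def nseq (k : ℕ) : ℝ := 4 * Real.pi ^ 2 * (Nat.nth IsSum2Sq k)

/-- The set `S` of Laplace eigenvalues of the standard torus. -/
def Sset : Set ℝ := Set.range nseq

/-- The number of elements of `S'` (a subset of `S`) that are `≤ X`. -/
noncomputable def countLE (S' : Set ℝ) (X : ℝ) : ℕ :=
  Nat.card {k : ℕ // nseq k ∈ S' ∧ nseq k ≤ X}

/-- `S' ⊆ S` has density one in `S`. -/
def HasDensityOne (S' : Set ℝ) : Prop :=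
  Tendsto (fun X : ℝ => (countLE S' X : ℝ) / (countLE Sset X)) atTop (nhds 1)

/-- The Euclidean norm of a lattice vector. -/
noncomputable def znorm (ξ : Fin 2 → ℤ) : ℝ := Real.sqrt (∑ i, (ξ i : ℝ) ^ 2)

/-- Huxley's exponent in the circle law. -/
noncomputable def θH : ℝ := 133 / 416

/-!
Write `n_k = 4π²m`. For `λ ∈ (n_k, n_{k+1})` the conclusion can fail only if the next sum of two
squares after `m` lies beyond `m + m ^ δ`, or if two distinct lattice points at distance
`O(m ^ ε)` both have squared norm within `O(m ^ δ)` of `m`. Up to `Y` the first happens for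
`O(Y ^ (1 / (1 + δ)))` sums of two squares, since these are themselves `m ^ δ`-separated. The second
happens for `O(Y ^ (1 / 2 + 2δ + 2ε))` integers: the two squared norms differ by a linear form in
`ξ`, so `ξ` is determined by one coordinate, the shift `ζ`, and the two deviations from `m`. Both
counts are negligible, because up to `Y` there are `≫ Y ^ (1 - η)` sums of two squares for every
`η > 0`: by the divisor bound the squares have almost minimal additive energy, and the
Cauchy–Schwarz inequality turns this into a large sumset.
-/

lemma natCast_add_one_le_const_mul_two_pow_rpow {η : ℝ} (hη : 0 < η) (v : ℕ) :
    (v : ℝ) + 1 ≤ (1 + (η * log 2)⁻¹) * ((2 : ℝ) ^ v) ^ η := by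
  have : 0 < η * log 2 := mul_pos hη (log_pos one_lt_two)
  have hexp : ((2 : ℝ) ^ v) ^ η = exp (v * (η * log 2)) := by
    rw [rpow_def_of_pos (by positivity), log_pow]
    ring_nf
  calc (v : ℝ) + 1 ≤ v + 1 + (v * (η * log 2) + (η * log 2)⁻¹) :=
        le_add_of_nonneg_right (by positivity)
    _ = (1 + (η * log 2)⁻¹) * (v * (η * log 2) + 1) := by field_simp; ring
    _ ≤ (1 + (η * log 2)⁻¹) * ((2 : ℝ) ^ v) ^ η := by
        rw [hexp]
        gcongr
        exact add_one_le_exp _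

lemma natCast_add_one_le_pow_rpow {x η : ℝ} (hx : 0 ≤ x) (h : 2 ≤ x ^ η) (v : ℕ) :
    (v : ℝ) + 1 ≤ (x ^ v) ^ η := by
  have hv : v + 1 ≤ 2 ^ v := Nat.lt_two_pow_self
  calc (v : ℝ) + 1 ≤ 2 ^ v := by exact_mod_cast hv
    _ ≤ (x ^ η) ^ v := by gcongr
    _ = (x ^ v) ^ η := by rw [← rpow_mul_natCast hx, ← rpow_natCast_mul hx, mul_comm]

-- Only the boundedly many primes with `p ^ η < 2` contribute to the constant.
theorem exists_card_divisors_le_const_mul_rpow {η : ℝ} (hη : 0 < η) :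
    ∃ C : ℝ, 0 < C ∧ ∀ n : ℕ, (#n.divisors : ℝ) ≤ C * (n : ℝ) ^ η := by
  obtain ⟨P, hP⟩ := exists_nat_ge ((2 : ℝ) ^ η⁻¹)
  set K : ℝ := 1 + (η * log 2)⁻¹
  have hK : 1 ≤ K := le_add_of_nonneg_right (by have := log_pos one_lt_two; positivity)
  have hprime (p v : ℕ) (hp : p.Prime) :
      (v : ℝ) + 1 ≤ (if p < P then K else 1) * ((p : ℝ) ^ v) ^ η := by
    split_ifs with hpP
    · have hp2 : (2 : ℝ) ≤ p := by exact_mod_cast hp.two_le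
      exact (natCast_add_one_le_const_mul_two_pow_rpow hη v).trans (by gcongr)
    · have hPp : (2 : ℝ) ^ η⁻¹ ≤ p := hP.trans (by exact_mod_cast not_lt.mp hpP)
      rw [one_mul]
      exact natCast_add_one_le_pow_rpow p.cast_nonneg
        ((rpow_inv_le_iff_of_pos zero_le_two p.cast_nonneg hη).mp hPp) v
  refine ⟨K ^ P, by positivity, fun n ↦ ?_⟩
  obtain rfl | hn := eq_or_ne n 0
  · simp [hη.ne']
  have hfact : ∏ p ∈ n.primeFactors, (p : ℝ) ^ n.factorization p = n := by
    exact_mod_cast Nat.prod_factorization_pow_eq_self hn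
  have hsmall : ∏ p ∈ n.primeFactors, (if p < P then K else 1) ≤ K ^ P := by
    rw [← prod_filter, prod_const]
    refine pow_le_pow_right₀ hK ?_
    refine (card_le_card fun p hp ↦ ?_).trans_eq (card_range P)
    exact mem_range.mpr (mem_filter.mp hp).2
  calc (#n.divisors : ℝ)
      = ∏ p ∈ n.primeFactors, ((n.factorization p : ℝ) + 1) := by
        rw [Nat.card_divisors hn]
        push_cast
        rfl
    _ ≤ ∏ p ∈ n.primeFactors, (if p < P then K else 1) * ((p : ℝ) ^ n.factorization p) ^ η :=
        prod_le_prod (fun _ _ ↦ by positivity) fun p hp ↦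
          hprime p _ (Nat.prime_of_mem_primeFactors hp)
    _ = (∏ p ∈ n.primeFactors, (if p < P then K else 1)) * (n : ℝ) ^ η := by
        rw [prod_mul_distrib, finsetProd_rpow _ _ (fun _ _ ↦ by positivity), hfact]
    _ ≤ K ^ P * (n : ℝ) ^ η := by gcongr

lemma card_filter_sq_sub_sq_eq_le_card_divisors (s t : Finset ℕ) {n : ℤ} (hn : n ≠ 0) :
    #{p ∈ s ×ˢ t | (p.1 : ℤ) ^ 2 - (p.2 : ℤ) ^ 2 = n} ≤ #n.natAbs.divisors := by
  have hfactor {x y : ℕ} (h : (x : ℤ) ^ 2 - (y : ℤ) ^ 2 = n) : ((x + y : ℕ) : ℤ) * (x - y) = n := by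
    rw [← h]
    push_cast
    ring
  refine card_le_card_of_injOn (fun p ↦ p.1 + p.2) ?_ ?_
  · rintro ⟨x, y⟩ hxy
    have hdvd : ((x + y : ℕ) : ℤ) ∣ n := Dvd.intro _ (hfactor (mem_filter.mp hxy).2)
    exact Nat.mem_divisors.mpr ⟨Int.natCast_dvd.mp hdvd, Int.natAbs_ne_zero.mpr hn⟩
  · rintro ⟨x, y⟩ hxy ⟨x', y'⟩ hxy' (hsum : x + y = x' + y')
    have hxy := hfactor (mem_filter.mp hxy).2
    have hxy' := hfactor (mem_filter.mp hxy').2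
    rw [← hsum, ← hxy] at hxy'
    have hdiff := mul_left_cancel₀ (left_ne_zero_of_mul (hxy ▸ hn)) hxy'
    ext <;> grind

lemma card_filter_add_eq_add_le_card_divisors (s : Finset ℕ) {b c : ℕ} (hbc : b ≠ c) :
    #{a ∈ s.image (· ^ 2) ×ˢ s.image (· ^ 2) | a.1 + b = a.2 + c} ≤
      #((c : ℤ) - b).natAbs.divisors := by
  rw [← prodMap_image_product, filter_image]
  refine card_image_le.trans (le_trans (card_le_card fun p hp ↦ ?_)
    (card_filter_sq_sub_sq_eq_le_card_divisors s s (sub_ne_zero.mpr (by exact_mod_cast hbc.symm))))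
  obtain ⟨hps, hp⟩ := mem_filter.mp hp
  have hp : (p.1 : ℤ) ^ 2 + b = (p.2 : ℤ) ^ 2 + c := by exact_mod_cast hp
  exact mem_filter.mpr ⟨hps, by linear_combination hp⟩

section AdditiveEnergy

variable {α : Type*} [DecidableEq α] [Add α] [IsRightCancelAdd α] {s : Finset α} {M : ℕ}

lemma addEnergy_self_le_of_forall_offDiag
    (hM : ∀ b ∈ s.offDiag, #{a ∈ s ×ˢ s | a.1 + b.1 = a.2 + b.2} ≤ M) :
    s.addEnergy s ≤ #s ^ 2 * (M + 1) := by
  have hdiag : ∀ b ∈ s.diag, #{a ∈ s ×ˢ s | a.1 + b.1 = a.2 + b.2} ≤ #s := by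
    rintro ⟨b, c⟩ hb
    obtain rfl : b = c := (mem_diag.mp hb).2
    simp only [add_left_inj]
    refine (card_le_card fun a ha ↦ ?_).trans_eq s.diag_card
    exact mem_diag.mpr ⟨(mem_product.mp (mem_filter.mp ha).1).1, (mem_filter.mp ha).2⟩
  calc s.addEnergy s
      = ∑ b ∈ s ×ˢ s, #{a ∈ s ×ˢ s | a.1 + b.1 = a.2 + b.2} := by
        simp_rw [addEnergy, card_filter, sum_product_right]
    _ = ∑ b ∈ s.diag, #{a ∈ s ×ˢ s | a.1 + b.1 = a.2 + b.2} +
          ∑ b ∈ s.offDiag, #{a ∈ s ×ˢ s | a.1 + b.1 = a.2 + b.2} := by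
        rw [← diag_union_offDiag, sum_union s.disjoint_diag_offDiag, diag_union_offDiag]
    _ ≤ #s.diag * #s + #s.offDiag * M :=
        add_le_add (sum_le_card_nsmul _ _ _ hdiag) (sum_le_card_nsmul _ _ _ hM)
    _ ≤ #s * #s + (#s * #s) * M := by
        rw [diag_card, offDiag_card]
        gcongr
        exact Nat.sub_le _ _
    _ = #s ^ 2 * (M + 1) := by ring

open Pointwise in
lemma card_sq_le_card_add_self_mul_of_forall_offDiag
    (hM : ∀ b ∈ s.offDiag, #{a ∈ s ×ˢ s | a.1 + b.1 = a.2 + b.2} ≤ M) :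
    #s ^ 2 ≤ #(s + s) * (M + 1) := by
  obtain rfl | hs := s.eq_empty_or_nonempty
  · simp
  have hpos : 0 < #s ^ 2 := pow_pos hs.card_pos 2
  refine le_of_mul_le_mul_left ?_ hpos
  calc #s ^ 2 * #s ^ 2 ≤ #(s + s) * s.addEnergy s := le_card_add_mul_addEnergy s s
    _ ≤ #(s + s) * (#s ^ 2 * (M + 1)) := by
        gcongr
        exact addEnergy_self_le_of_forall_offDiag hM
    _ = #s ^ 2 * (#(s + s) * (M + 1)) := by ring

end AdditiveEnergy

open scoped Classical in
/-- The number of `m ≤ Y` satisfying `P`. -/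
def countUpTo (P : ℕ → Prop) (Y : ℕ) : ℕ := #{m ∈ Finset.range (Y + 1) | P m}

section CountUpTo

variable {P Q : ℕ → Prop} {Y : ℕ}

lemma countUpTo_eq_card_filter [DecidablePred P] :
    countUpTo P Y = #{m ∈ Finset.range (Y + 1) | P m} := by
  unfold countUpTo
  congr!

lemma countUpTo_mono (h : ∀ m ≤ Y, P m → Q m) : countUpTo P Y ≤ countUpTo Q Y := by
  classical
  simp only [countUpTo_eq_card_filter]
  refine card_le_card fun m hm ↦ ?_
  rw [mem_filter] at hm ⊢
  exact ⟨hm.1, h m (mem_range_succ_iff.mp hm.1) hm.2⟩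

lemma countUpTo_or_le : countUpTo (fun m ↦ P m ∨ Q m) Y ≤ countUpTo P Y + countUpTo Q Y := by
  classical
  simp only [countUpTo_eq_card_filter, filter_or]
  exact card_union_le _ _

lemma countUpTo_and_add_countUpTo_and_not :
    countUpTo (fun m ↦ P m ∧ Q m) Y + countUpTo (fun m ↦ P m ∧ ¬Q m) Y = countUpTo P Y := by
  classical
  simp only [countUpTo_eq_card_filter, ← filter_filter]
  exact card_filter_add_card_filter_not _

end CountUpTo

open Pointwise in
lemma le_two_mul_countUpTo_isSum2Sq_mul {Y M : ℕ} (hM : ∀ n ≤ Y, #n.divisors ≤ M) :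
    Y ≤ 2 * (countUpTo IsSum2Sq Y * (M + 1)) := by
  classical
  set N := Nat.sqrt (Y / 2)
  set s : Finset ℕ := (Finset.range (N + 1)).image (· ^ 2)
  have hs_le : ∀ a ∈ s, a ≤ Y / 2 := by
    simp only [s, forall_mem_image, mem_range_succ_iff]
    exact fun x hx ↦ Nat.le_sqrt'.mp hx
  have hs_card : Y ≤ 2 * #s ^ 2 := by
    have hcard : #s = N + 1 := by
      rw [card_image_of_injective _ (Nat.pow_left_injective two_ne_zero), card_range]
    have hsqrt : Y / 2 < (N + 1) ^ 2 := Nat.lt_succ_sqrt' _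
    rw [hcard]
    omega
  have hsum : #(s + s) ≤ countUpTo IsSum2Sq Y := by
    rw [countUpTo_eq_card_filter]
    refine card_le_card (add_subset_iff.mpr fun a ha b hb ↦ mem_filter.mpr ⟨?_, ?_⟩)
    · have := hs_le a ha
      have := hs_le b hb
      exact mem_range_succ_iff.mpr (by omega)
    · obtain ⟨x, -, rfl⟩ := mem_image.mp ha
      obtain ⟨y, -, rfl⟩ := mem_image.mp hb
      exact ⟨x, y, by push_cast; rfl⟩
  have hfiber : ∀ b ∈ s.offDiag, #{a ∈ s ×ˢ s | a.1 + b.1 = a.2 + b.2} ≤ M := by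
    intro b hb
    obtain ⟨hb₁, hb₂, hne⟩ := mem_offDiag.mp hb
    have := hs_le _ hb₁
    have := hs_le _ hb₂
    exact (card_filter_add_eq_add_le_card_divisors _ hne).trans (hM _ (by omega))
  calc Y ≤ 2 * #s ^ 2 := hs_card
    _ ≤ 2 * (#(s + s) * (M + 1)) := by
        gcongr
        exact card_sq_le_card_add_self_mul_of_forall_offDiag hfiber
    _ ≤ 2 * (countUpTo IsSum2Sq Y * (M + 1)) := by gcongr

theorem exists_const_mul_rpow_le_countUpTo_isSum2Sq {η : ℝ} (hη : 0 < η) :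
    ∃ c : ℝ, 0 < c ∧ ∀ Y : ℕ, 1 ≤ Y → c * (Y : ℝ) ^ (1 - η) ≤ countUpTo IsSum2Sq Y := by
  obtain ⟨C, hC, hdiv⟩ := exists_card_divisors_le_const_mul_rpow hη
  refine ⟨(2 * (C + 1))⁻¹, by positivity, fun Y hY ↦ ?_⟩
  have hY1 : (1 : ℝ) ≤ Y := by exact_mod_cast hY
  set M : ℕ := ⌊C * (Y : ℝ) ^ η⌋₊
  have hM : ∀ n ≤ Y, #n.divisors ≤ M := fun n hn ↦
    Nat.le_floor ((hdiv n).trans (by gcongr))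
  have hM_le : (M : ℝ) + 1 ≤ (C + 1) * (Y : ℝ) ^ η := by
    have := Nat.floor_le (show 0 ≤ C * (Y : ℝ) ^ η by positivity)
    have := one_le_rpow hY1 hη.le
    linarith
  rw [inv_mul_le_iff₀ (by positivity), rpow_sub (by positivity), rpow_one,
    div_le_iff₀ (by positivity)]
  calc (Y : ℝ) ≤ 2 * (countUpTo IsSum2Sq Y * (M + 1)) := by
        exact_mod_cast le_two_mul_countUpTo_isSum2Sq_mul hM
    _ ≤ 2 * (countUpTo IsSum2Sq Y * ((C + 1) * (Y : ℝ) ^ η)) := by gcongr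
    _ = 2 * (C + 1) * countUpTo IsSum2Sq Y * (Y : ℝ) ^ η := by ring

lemma isLittleO_rpow_rpow_atTop {a b : ℝ} (hab : a < b) :
    (fun x : ℝ ↦ x ^ a) =o[atTop] fun x ↦ x ^ b := by
  refine (Asymptotics.isLittleO_iff_tendsto' ?_).mpr ?_
  · filter_upwards [eventually_gt_atTop 0] with x hx h
    exact absurd h (by positivity)
  · refine (tendsto_rpow_neg_atTop (sub_pos.mpr hab)).congr' ?_
    filter_upwards [eventually_gt_atTop 0] with x hx
    rw [← rpow_sub hx, neg_sub]

theorem isLittleO_rpow_countUpTo_isSum2Sq {β : ℝ} (hβ : β < 1) :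
    (fun Y : ℕ ↦ (Y : ℝ) ^ β) =o[atTop] fun Y ↦ (countUpTo IsSum2Sq Y : ℝ) := by
  obtain ⟨c, hc, hcount⟩ := exists_const_mul_rpow_le_countUpTo_isSum2Sq (half_pos (sub_pos.mpr hβ))
  have hpow : (fun Y : ℕ ↦ (Y : ℝ) ^ β) =o[atTop] fun Y : ℕ ↦ (Y : ℝ) ^ (1 - (1 - β) / 2) :=
    (isLittleO_rpow_rpow_atTop (by linarith)).comp_tendsto tendsto_natCast_atTop_atTop
  refine hpow.trans_isBigO (.of_bound c⁻¹ ?_)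
  filter_upwards [eventually_ge_atTop 1] with Y hY
  rw [norm_of_nonneg (by positivity), norm_of_nonneg (by positivity), ← div_eq_inv_mul,
    le_div_iff₀' hc]
  exact hcount Y hY

lemma isLittleO_countUpTo_isSum2Sq_of_le_rpow {P : ℕ → Prop} {K β : ℝ} (hβ : β < 1)
    (h : ∀ Y : ℕ, 1 ≤ Y → (countUpTo P Y : ℝ) ≤ K * (Y : ℝ) ^ β) :
    (fun Y ↦ (countUpTo P Y : ℝ)) =o[atTop] fun Y ↦ (countUpTo IsSum2Sq Y : ℝ) := by
  refine Asymptotics.IsBigO.trans_isLittleO (.of_bound K ?_)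
    (isLittleO_rpow_countUpTo_isSum2Sq hβ)
  filter_upwards [eventually_ge_atTop 1] with Y hY
  rw [norm_of_nonneg (by positivity), norm_of_nonneg (by positivity)]
  exact h Y hY

/-- Every element of `P` beyond `m` exceeds `m + g`; `m` itself need not lie in `P`. -/
def IsFollowedByGap (P : ℕ → Prop) (g : ℝ) (m : ℕ) : Prop :=
  ∀ m' : ℕ, P m' → m < m' → m + g < m'

lemma card_le_div_add_one_of_separated {s : Finset ℕ} {g Y : ℝ} (hg : 0 < g) (hY : 0 ≤ Y)
    (hsY : ∀ m ∈ s, (m : ℝ) ≤ Y) (hsep : ∀ m ∈ s, ∀ m' ∈ s, m < m' → m + g ≤ m') :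
    (#s : ℝ) ≤ Y / g + 1 := by
  have hmono : StrictMonoOn (fun m : ℕ ↦ ⌊(m : ℝ) / g⌋₊) s := fun m hm m' hm' hlt ↦ by
    rw [← Nat.succ_le_iff, Nat.succ_eq_add_one, ← Nat.floor_add_one (by positivity),
      div_add_one hg.ne']
    refine Nat.floor_le_floor ?_
    gcongr
    exact hsep m hm m' hm' hlt
  have hcard : #s ≤ #(Finset.range (⌊Y / g⌋₊ + 1)) :=
    card_le_card_of_injOn _ (fun m hm ↦ mem_coe.mpr <| mem_range_succ_iff.mpr <| by
      gcongr; exact hsY m hm) hmono.injOn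
  calc (#s : ℝ) ≤ ⌊Y / g⌋₊ + 1 := by exact_mod_cast hcard.trans_eq (card_range _)
    _ ≤ Y / g + 1 := by
        gcongr
        exact Nat.floor_le (by positivity)

-- The cut-off `Y ^ (1 / (1 + δ))` balances the trivial bound below it with the separation above it.
theorem countUpTo_isFollowedByGap_rpow_le (P : ℕ → Prop) {δ : ℝ} (hδ : 0 ≤ δ) {Y : ℕ}
    (hY : 1 ≤ Y) :
    (countUpTo (fun m ↦ P m ∧ IsFollowedByGap P ((m : ℝ) ^ δ) m) Y : ℝ) ≤
      4 * (Y : ℝ) ^ (1 + δ)⁻¹ := by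
  classical
  have hY1 : (1 : ℝ) ≤ Y := by exact_mod_cast hY
  set A : ℝ := (Y : ℝ) ^ (1 + δ)⁻¹
  have hA1 : 1 ≤ A := one_le_rpow hY1 (by positivity)
  have hYA : (Y : ℝ) / A ^ δ = A := by
    rw [div_eq_iff (by positivity), ← rpow_one_add' (by positivity) (by positivity)]
    exact (rpow_inv_rpow (by positivity) (by positivity)).symm
  rw [countUpTo_eq_card_filter]
  set s : Finset ℕ := {m ∈ Finset.range (Y + 1) | P m ∧ IsFollowedByGap P ((m : ℝ) ^ δ) m}
  have hbelow : (#{m ∈ s | ((m : ℕ) : ℝ) ≤ A} : ℝ) ≤ A / 1 + 1 :=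
    card_le_div_add_one_of_separated one_pos (by positivity) (fun m hm ↦ (mem_filter.mp hm).2)
      fun m _ m' _ hlt ↦ by exact_mod_cast hlt
  have habove : (#{m ∈ s | ¬((m : ℕ) : ℝ) ≤ A} : ℝ) ≤ Y / A ^ δ + 1 := by
    refine card_le_div_add_one_of_separated (by positivity) (by positivity) (fun m hm ↦ ?_)
      fun m hm m' hm' hlt ↦ ?_
    · exact_mod_cast mem_range_succ_iff.mp (mem_filter.mp (mem_filter.mp hm).1).1
    · obtain ⟨hms, hAm⟩ := mem_filter.mp hm
      have hgap := (mem_filter.mp hms).2.2 m' (mem_filter.mp (mem_filter.mp hm').1).2.1 hlt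
      exact le_trans (by gcongr; exact (not_le.mp hAm).le) hgap.le
  calc (#s : ℝ) = #{m ∈ s | ((m : ℕ) : ℝ) ≤ A} + #{m ∈ s | ¬((m : ℕ) : ℝ) ≤ A} := by
        exact_mod_cast (card_filter_add_card_filter_not _).symm
    _ ≤ (A / 1 + 1) + (Y / A ^ δ + 1) := add_le_add hbelow habove
    _ ≤ 4 * A := by rw [hYA]; linarith

/-- Two distinct lattice points `ξ`, `ξ + ζ` at distance at most `Z` whose squared norms both lie
within `D` of `m`. -/
def HasClosePairNearCircle (D Z : ℝ) (m : ℕ) : Prop :=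
  ∃ ξ ζ : Fin 2 → ℤ, ζ ≠ 0 ∧ znorm ζ ≤ Z ∧
    |∑ i, (ξ i : ℝ) ^ 2 - m| ≤ D ∧ |∑ i, ((ξ i + ζ i : ℤ) : ℝ) ^ 2 - m| ≤ D

lemma HasClosePairNearCircle.mono {D D' Z Z' : ℝ} {m : ℕ} (hD : D ≤ D') (hZ : Z ≤ Z') :
    HasClosePairNearCircle D Z m → HasClosePairNearCircle D' Z' m :=
  fun ⟨ξ, ζ, hζ, hZζ, hξ, hξζ⟩ ↦ ⟨ξ, ζ, hζ, hZζ.trans hZ, hξ.trans hD, hξζ.trans hD⟩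

lemma abs_le_znorm (ξ : Fin 2 → ℤ) (i : Fin 2) : |(ξ i : ℝ)| ≤ znorm ξ :=
  abs_le_sqrt (single_le_sum (f := fun j ↦ (ξ j : ℝ) ^ 2) (fun _ _ ↦ sq_nonneg _) (mem_univ i))

lemma sum_fin_two_eq_add_rev {M : Type*} [AddCommMonoid M] (f : Fin 2 → M) (i : Fin 2) :
    ∑ j, f j = f i + f i.rev := by
  fin_cases i
  · exact Fin.sum_univ_two f
  · exact (Fin.sum_univ_two f).trans (add_comm _ _)

/-- The integers of absolute value at most `r`. -/
def intsAbsLE (r : ℝ) : Finset ℤ := Finset.Icc (-⌊r⌋) ⌊r⌋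

lemma mem_intsAbsLE {r : ℝ} {z : ℤ} : z ∈ intsAbsLE r ↔ |(z : ℝ)| ≤ r := by
  rw [intsAbsLE, Finset.mem_Icc, ← abs_le, Int.le_floor, Int.cast_abs]

lemma card_intsAbsLE_le {r : ℝ} (hr : 1 ≤ r) : (#(intsAbsLE r) : ℝ) ≤ 3 * r := by
  have hfloor : 0 ≤ ⌊r⌋ := Int.floor_nonneg.mpr (by linarith)
  have hcard : (#(intsAbsLE r) : ℤ) = 2 * ⌊r⌋ + 1 := by
    rw [intsAbsLE, Int.card_Icc, Int.toNat_of_nonneg (by linarith)]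
    ring
  calc (#(intsAbsLE r) : ℝ) = 2 * ⌊r⌋ + 1 := by exact_mod_cast hcard
    _ ≤ 3 * r := by linarith [Int.floor_le r]

-- Subtracting the two equations leaves one that is linear in `x`, with leading coefficient `2z`.
lemma eq_of_sq_add_sq_eq_add {m m' r s x x' y z w : ℤ} (hz : z ≠ 0)
    (h : x ^ 2 + y ^ 2 = m + r) (hshift : (x + z) ^ 2 + (y + w) ^ 2 = m + s)
    (h' : x' ^ 2 + y ^ 2 = m' + r) (hshift' : (x' + z) ^ 2 + (y + w) ^ 2 = m' + s) :
    m = m' := by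
  have hx : x = x' :=
    mul_left_cancel₀ (mul_ne_zero two_ne_zero hz) (by linear_combination hshift - h - hshift' + h')
  subst hx
  linarith

lemma countUpTo_hasClosePairNearCircle_le {D Z : ℝ} (hD : 1 ≤ D) (hZ : 1 ≤ Z) (Y : ℕ) :
    (countUpTo (HasClosePairNearCircle D Z) Y : ℝ) ≤ 243 * (Z ^ 2 * D ^ 2 * √(Y + D)) := by
  classical
  have hR : 1 ≤ √(Y + D) := one_le_sqrt.mpr (by linarith [Y.cast_nonneg (α := ℝ)])
  let parameters := intsAbsLE Z ×ˢ intsAbsLE Z ×ˢ intsAbsLE √(Y + D) ×ˢ intsAbsLE D ×ˢ intsAbsLE D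
  let IsPairAt (m : ℕ) : ℤ × ℤ × ℤ × ℤ × ℤ → Prop := fun (z, w, y, r, s) ↦
    z ≠ 0 ∧ ∃ x : ℤ, x ^ 2 + y ^ 2 = m + r ∧ (x + z) ^ 2 + (y + w) ^ 2 = m + s
  have hcard : countUpTo (HasClosePairNearCircle D Z) Y ≤ #parameters := by
    rw [countUpTo_eq_card_filter]
    refine card_le_card_of_forall_subsingleton IsPairAt ?_ ?_
    · intro m hm
      obtain ⟨hmY, ξ, ζ, hζ, hζZ, hξ, hξζ⟩ := mem_filter.mp hm
      have hmY : (m : ℝ) ≤ Y := by exact_mod_cast mem_range_succ_iff.mp hmY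
      obtain ⟨i, hi⟩ := Function.ne_iff.mp hζ
      rw [sum_fin_two_eq_add_rev _ i] at hξ hξζ
      refine ⟨(ζ i, ζ i.rev, ξ i.rev, ξ i ^ 2 + ξ i.rev ^ 2 - m,
        (ξ i + ζ i) ^ 2 + (ξ i.rev + ζ i.rev) ^ 2 - m), ?_, hi, ξ i, by ring, by ring⟩
      simp only [parameters, mem_product, mem_intsAbsLE]
      refine ⟨(abs_le_znorm ζ i).trans hζZ, (abs_le_znorm ζ i.rev).trans hζZ, abs_le_sqrt ?_,
        mod_cast hξ, mod_cast hξζ⟩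
      linarith [(abs_le.mp hξ).2, sq_nonneg (ξ i : ℝ)]
    · rintro ⟨z, w, y, r, s⟩ - m ⟨-, hz, x, hx, hxz⟩ m' ⟨-, -, x', hx', hxz'⟩
      exact_mod_cast eq_of_sq_add_sq_eq_add hz hx hxz hx' hxz'
  calc (countUpTo (HasClosePairNearCircle D Z) Y : ℝ) ≤ #parameters := by exact_mod_cast hcard
    _ = #(intsAbsLE Z) * (#(intsAbsLE Z) *
          (#(intsAbsLE √(Y + D)) * (#(intsAbsLE D) * #(intsAbsLE D)))) := by
        simp only [parameters, card_product, Nat.cast_mul]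
    _ ≤ 3 * Z * (3 * Z * (3 * √(Y + D) * (3 * D * (3 * D)))) := by
        gcongr <;> exact card_intsAbsLE_le ‹_›
    _ = 243 * (Z ^ 2 * D ^ 2 * √(Y + D)) := by ring

theorem countUpTo_hasClosePairNearCircle_rpow_le {a b δ ε : ℝ} (ha : 1 ≤ a) (hb : 1 ≤ b)
    (hδ : 0 ≤ δ) (hδ1 : δ ≤ 1) (hε : 0 ≤ ε) {Y : ℕ} (hY : 1 ≤ Y) :
    (countUpTo (fun m ↦ HasClosePairNearCircle (a * (m : ℝ) ^ δ) (b * (m : ℝ) ^ ε) m) Y : ℝ) ≤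
      243 * b ^ 2 * a ^ 2 * √(1 + a) * (Y : ℝ) ^ (1 / 2 + 2 * δ + 2 * ε) := by
  have hY1 : (1 : ℝ) ≤ Y := by exact_mod_cast hY
  have hδY : (Y : ℝ) ^ δ ≤ Y := rpow_le_self_of_one_le hY1 hδ1
  have hmono : ∀ m ≤ Y, HasClosePairNearCircle (a * (m : ℝ) ^ δ) (b * (m : ℝ) ^ ε) m →
      HasClosePairNearCircle (a * (Y : ℝ) ^ δ) (b * (Y : ℝ) ^ ε) m :=
    fun m hm ↦ .mono (by gcongr) (by gcongr)
  have hrpow : ((Y : ℝ) ^ ε) ^ 2 * ((Y : ℝ) ^ δ) ^ 2 * √Y = (Y : ℝ) ^ (1 / 2 + 2 * δ + 2 * ε) := by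
    rw [sqrt_eq_rpow, ← rpow_mul_natCast (by positivity), ← rpow_mul_natCast (by positivity),
      ← rpow_add (by positivity), ← rpow_add (by positivity)]
    push_cast
    ring_nf
  calc (countUpTo (fun m ↦ HasClosePairNearCircle (a * (m : ℝ) ^ δ) (b * (m : ℝ) ^ ε) m) Y : ℝ)
      ≤ countUpTo (HasClosePairNearCircle (a * (Y : ℝ) ^ δ) (b * (Y : ℝ) ^ ε)) Y := by
        exact_mod_cast countUpTo_mono hmono
    _ ≤ 243 * ((b * (Y : ℝ) ^ ε) ^ 2 * (a * (Y : ℝ) ^ δ) ^ 2 * √(Y + a * (Y : ℝ) ^ δ)) :=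
        countUpTo_hasClosePairNearCircle_le (one_le_mul_of_one_le_of_one_le ha (one_le_rpow hY1 hδ))
          (one_le_mul_of_one_le_of_one_le hb (one_le_rpow hY1 hε)) Y
    _ ≤ 243 * ((b * (Y : ℝ) ^ ε) ^ 2 * (a * (Y : ℝ) ^ δ) ^ 2 * √((1 + a) * Y)) := by
        gcongr
        linarith [mul_le_mul_of_nonneg_left hδY (zero_le_one.trans ha)]
    _ = 243 * b ^ 2 * a ^ 2 * √(1 + a) * (Y : ℝ) ^ (1 / 2 + 2 * δ + 2 * ε) := by
        rw [← hrpow, sqrt_mul (by positivity)]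
        ring

lemma infinite_isSum2Sq : {m | IsSum2Sq m}.Infinite :=
  Set.infinite_of_injective_forall_mem (Nat.pow_left_injective two_ne_zero)
    fun n ↦ ⟨n, 0, by push_cast; ring⟩

lemma isSum2Sq_nth (k : ℕ) : IsSum2Sq (Nat.nth IsSum2Sq k) :=
  Nat.nth_mem_of_infinite infinite_isSum2Sq k

lemma nseq_injective : Function.Injective nseq := fun a b hab ↦
  Nat.nth_injective infinite_isSum2Sq <|
    Nat.cast_injective (mul_left_cancel₀ (by positivity : 4 * Real.pi ^ 2 ≠ 0) hab)

lemma nseq_le_iff_nth_le_floor {X : ℝ} (hX : 0 ≤ X) (k : ℕ) :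
    nseq k ≤ X ↔ Nat.nth IsSum2Sq k ≤ ⌊X / (4 * Real.pi ^ 2)⌋₊ := by
  rw [Nat.le_floor_iff (by positivity), le_div_iff₀' (by positivity), nseq]

lemma countLE_image_nseq (Q : ℕ → Prop) {X : ℝ} (hX : 0 ≤ X) :
    countLE (nseq '' {k | Q (Nat.nth IsSum2Sq k)}) X =
      countUpTo (fun m ↦ IsSum2Sq m ∧ Q m) ⌊X / (4 * Real.pi ^ 2)⌋₊ := by
  classical
  simp only [countLE, nseq_injective.mem_set_image, Set.mem_ofPred_eq, nseq_le_iff_nth_le_floor hX]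
  rw [countUpTo_eq_card_filter, ← Nat.card_eq_finsetCard]
  refine Nat.card_eq_of_bijective (fun k ↦ ⟨Nat.nth IsSum2Sq k.1, ?_⟩) ⟨?_, ?_⟩
  · exact mem_filter.mpr ⟨mem_range_succ_iff.mpr k.2.2, isSum2Sq_nth _, k.2.1⟩
  · exact fun k l hkl ↦
      Subtype.ext (Nat.nth_injective infinite_isSum2Sq (congrArg Subtype.val hkl))
  · rintro ⟨m, hm⟩
    obtain ⟨hmX, hm, hQ⟩ := mem_filter.mp hm
    have hnth : Nat.nth IsSum2Sq (Nat.count IsSum2Sq m) = m := Nat.nth_count hm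
    exact ⟨⟨Nat.count IsSum2Sq m, by rwa [hnth], by rw [hnth]; exact mem_range_succ_iff.mp hmX⟩,
      Subtype.ext hnth⟩

lemma countLE_Sset {X : ℝ} (hX : 0 ≤ X) :
    countLE Sset X = countUpTo IsSum2Sq ⌊X / (4 * Real.pi ^ 2)⌋₊ := by
  simpa [Sset] using countLE_image_nseq (fun _ ↦ True) hX

lemma countUpTo_isSum2Sq_pos (Y : ℕ) : 0 < countUpTo IsSum2Sq Y := by
  classical
  rw [countUpTo_eq_card_filter]
  exact card_pos.mpr ⟨0, mem_filter.mpr ⟨by simp, 0, 0, by simp⟩⟩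

theorem hasDensityOne_image_nseq_of_isLittleO {Q : ℕ → Prop}
    (h : (fun Y ↦ (countUpTo (fun m ↦ IsSum2Sq m ∧ ¬Q m) Y : ℝ)) =o[atTop]
      fun Y ↦ (countUpTo IsSum2Sq Y : ℝ)) :
    HasDensityOne (nseq '' {k | Q (Nat.nth IsSum2Sq k)}) := by
  have hfloor : Tendsto (fun X : ℝ ↦ ⌊X / (4 * Real.pi ^ 2)⌋₊) atTop atTop :=
    tendsto_nat_floor_atTop.comp (tendsto_id.atTop_div_const (by positivity))
  have hlim := (h.tendsto_div_nhds_zero.comp hfloor).const_sub 1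
  rw [sub_zero] at hlim
  refine hlim.congr' ?_
  filter_upwards [eventually_ge_atTop 0] with X hX
  rw [countLE_image_nseq Q hX, countLE_Sset hX, Function.comp_apply]
  set Y := ⌊X / (4 * Real.pi ^ 2)⌋₊
  have hpos : (0 : ℝ) < countUpTo IsSum2Sq Y := by exact_mod_cast countUpTo_isSum2Sq_pos Y
  have hsplit : (countUpTo (fun m ↦ IsSum2Sq m ∧ Q m) Y : ℝ) +
      countUpTo (fun m ↦ IsSum2Sq m ∧ ¬Q m) Y = countUpTo IsSum2Sq Y := by
    exact_mod_cast countUpTo_and_add_countUpTo_and_not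
  rw [eq_div_iff hpos.ne', sub_mul, one_mul, div_mul_cancel₀ _ hpos.ne']
  linarith

/-- The `m` for which `4π²m` is kept in the density-one set: the next sum of two squares is within
`m ^ δ`, and no two lattice points near the circle `|ξ|² = m` are close together. The factors `2`
and `3` absorb the passage from `4π²m` to `λ`. -/
def IsSeparated (δ ε : ℝ) (m : ℕ) : Prop :=
  ¬IsFollowedByGap IsSum2Sq ((m : ℝ) ^ δ) m ∧
    ¬HasClosePairNearCircle (2 * (m : ℝ) ^ δ) (3 * (m : ℝ) ^ ε) m

section Separation

variable {δ ε : ℝ}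

theorem isLittleO_countUpTo_not_isSeparated (hδ : 0 < δ) (hε : 0 ≤ ε) (hδε : δ + ε < 1 / 4) :
    (fun Y ↦ (countUpTo (fun m ↦ IsSum2Sq m ∧ ¬IsSeparated δ ε m) Y : ℝ)) =o[atTop]
      fun Y ↦ (countUpTo IsSum2Sq Y : ℝ) := by
  have hgap : (fun Y ↦ (countUpTo (fun m ↦ IsSum2Sq m ∧
      IsFollowedByGap IsSum2Sq ((m : ℝ) ^ δ) m) Y : ℝ)) =o[atTop]
      fun Y ↦ (countUpTo IsSum2Sq Y : ℝ) :=
    isLittleO_countUpTo_isSum2Sq_of_le_rpow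
      (inv_lt_one_of_one_lt₀ (lt_add_of_pos_right 1 hδ))
      fun _ ↦ countUpTo_isFollowedByGap_rpow_le IsSum2Sq hδ.le
  have hpair : (fun Y ↦ (countUpTo (fun m ↦
      HasClosePairNearCircle (2 * (m : ℝ) ^ δ) (3 * (m : ℝ) ^ ε) m) Y : ℝ)) =o[atTop]
      fun Y ↦ (countUpTo IsSum2Sq Y : ℝ) :=
    isLittleO_countUpTo_isSum2Sq_of_le_rpow (by linarith)
      fun _ ↦ countUpTo_hasClosePairNearCircle_rpow_le one_le_two (by norm_num) hδ.le
        (by linarith) hε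
  refine Asymptotics.IsBigO.trans_isLittleO (.of_norm_le fun Y ↦ ?_) (hgap.add hpair)
  rw [norm_of_nonneg (by positivity)]
  norm_cast
  refine le_trans (countUpTo_mono fun m _ ⟨hm, hbad⟩ ↦ ?_) countUpTo_or_le
  rw [IsSeparated, not_and_or, not_not, not_not] at hbad
  exact hbad.imp_left (And.intro hm)

lemma nseq_succ_le_of_not_isFollowedByGap {g : ℝ} {k : ℕ}
    (h : ¬IsFollowedByGap IsSum2Sq g (Nat.nth IsSum2Sq k)) :
    nseq (k + 1) ≤ 4 * Real.pi ^ 2 * (Nat.nth IsSum2Sq k + g) := by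
  simp only [IsFollowedByGap, not_forall, not_lt] at h
  obtain ⟨m, hm, hlt, hle⟩ := h
  have hnext : Nat.nth IsSum2Sq (k + 1) ≤ m :=
    not_lt.mp fun hcon ↦ hlt.not_ge (Nat.le_nth_of_lt_nth_succ hcon hm)
  rw [nseq]
  gcongr
  exact le_trans (by exact_mod_cast hnext) hle

lemma mul_rpow_le_mul_rpow_of_one_le {κ x : ℝ} (hκ : 1 ≤ κ) (hx : 0 ≤ x) (hδ : δ ≤ 1) :
    (κ * x) ^ δ ≤ κ * x ^ δ := by
  rw [mul_rpow (by positivity) hx]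
  gcongr
  exact rpow_le_self_of_one_le hκ hδ

lemma rpow_le_three_mul_rpow {x y : ℝ} (hx : 0 ≤ x) (hy : 0 ≤ y) (hxy : x ≤ 81 * y)
    (hε : 0 ≤ ε) (hε4 : ε ≤ 1 / 4) : x ^ ε ≤ 3 * y ^ ε := by
  have h81 : (81 : ℝ) ^ ε ≤ 3 :=
    calc (81 : ℝ) ^ ε ≤ 81 ^ (1 / 4 : ℝ) := by gcongr; norm_num
      _ = (3 ^ (4 : ℝ)) ^ (1 / 4 : ℝ) := by norm_num
      _ = 3 := by rw [← rpow_mul (by norm_num)]; norm_num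
  calc x ^ ε ≤ (81 * y) ^ ε := by gcongr
    _ = 81 ^ ε * y ^ ε := mul_rpow (by norm_num) hy
    _ ≤ 3 * y ^ ε := by gcongr

lemma abs_sub_le_of_abs_mul_sub_le {κ x m d : ℝ} (hκ : 0 < κ) (h : |κ * x - κ * m| ≤ κ * d) :
    |x - m| ≤ d := by
  rw [← mul_sub, abs_mul, abs_of_pos hκ] at h
  exact le_of_mul_le_mul_left h hκ

-- Otherwise `ξ` and `ξ + ζ` would form a close pair near the circle `|ξ|² = m`.
theorem rpow_le_abs_of_isSeparated (hδ : 0 ≤ δ) (hε : 0 ≤ ε) (hδε : δ + ε ≤ 1 / 4) {k : ℕ}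
    (hk : IsSeparated δ ε (Nat.nth IsSum2Sq k)) (hk0 : 0 < nseq k) {lam : ℝ}
    (hlam : lam ∈ Set.Ioo (nseq k) (nseq (k + 1))) {ζ : Fin 2 → ℤ} (hζ : ζ ≠ 0)
    (hζlam : znorm ζ ≤ lam ^ ε) {ξ : Fin 2 → ℤ}
    (hξ : |4 * Real.pi ^ 2 * (∑ i, (ξ i : ℝ) ^ 2) - nseq k| ≤ nseq k ^ δ) :
    nseq k ^ δ ≤ |4 * Real.pi ^ 2 * (∑ i, ((ξ i + ζ i : ℤ) : ℝ) ^ 2) - lam| := by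
  by_contra! hlt
  obtain ⟨hgap, hpair⟩ := hk
  have hlam_le := hlam.2.le.trans (nseq_succ_le_of_not_isFollowedByGap hgap)
  have hlam_gt := hlam.1
  simp only [nseq] at hξ hlam_gt hk0 hlt
  set m := Nat.nth IsSum2Sq k
  set κ := 4 * Real.pi ^ 2
  have hκ : 0 < κ := by positivity
  have hκ1 : 1 ≤ κ := by nlinarith [Real.pi_gt_three]
  have hκ_le : 2 * κ ≤ 81 := by nlinarith [Real.pi_lt_d2, Real.pi_pos]
  have hm1 : (1 : ℝ) ≤ m := by
    exact_mod_cast Nat.one_le_iff_ne_zero.mpr fun hm ↦ by simp [hm] at hk0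
  have hpow : (κ * m) ^ δ ≤ κ * (m : ℝ) ^ δ :=
    mul_rpow_le_mul_rpow_of_one_le hκ1 (by positivity) (by linarith)
  have hlam81 : lam ≤ 81 * m := by
    have hm_pow : (m : ℝ) ^ δ ≤ m := rpow_le_self_of_one_le hm1 (by linarith)
    calc lam ≤ κ * (m + (m : ℝ) ^ δ) := hlam_le
      _ ≤ κ * (m + m) := by gcongr
      _ = 2 * κ * m := by ring
      _ ≤ 81 * m := by gcongr
  refine hpair ⟨ξ, ζ, hζ, hζlam.trans ?_, abs_sub_le_of_abs_mul_sub_le hκ ?_,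
    abs_sub_le_of_abs_mul_sub_le hκ ?_⟩
  · exact rpow_le_three_mul_rpow (hk0.trans hlam_gt).le (by positivity) hlam81 hε (by linarith)
  · exact hξ.trans (by linarith [rpow_nonneg hk0.le δ])
  · rw [abs_le]
    obtain ⟨hlower, hupper⟩ := abs_lt.mp hlt
    constructor <;> linarith

end Separation

theorem shifted_annulus_separation_general {δ ε : ℝ} (hδ : 0 < δ) (hε : 0 ≤ ε)
    (hδε : δ + ε < 1 / 4) :
    ∃ S' : Set ℝ, S' ⊆ Sset ∧ HasDensityOne S' ∧
    ∃ C lam0 : ℝ, 0 < C ∧ 0 < lam0 ∧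
      ∀ k : ℕ, nseq k ∈ S' → lam0 ≤ nseq k →
      ∀ lam : ℝ, lam ∈ Set.Ioo (nseq k) (nseq (k + 1)) →
      ∀ ζ : Fin 2 → ℤ, ζ ≠ 0 → znorm ζ ≤ lam ^ ε →
      ∀ ξ : Fin 2 → ℤ, |4 * Real.pi ^ 2 * (∑ i, (ξ i : ℝ) ^ 2) - nseq k| ≤ (nseq k) ^ δ →
        C⁻¹ * (nseq k) ^ δ ≤ |4 * Real.pi ^ 2 * (∑ i, ((ξ i + ζ i : ℤ) : ℝ) ^ 2) - lam| ∧
        |(4 * Real.pi ^ 2 * (∑ i, ((ξ i + ζ i : ℤ) : ℝ) ^ 2) - lam)⁻¹| ≤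
          C * (nseq k) ^ (-δ) := by
  refine ⟨nseq '' {k | IsSeparated δ ε (Nat.nth IsSum2Sq k)}, Set.image_subset_range _ _,
    hasDensityOne_image_nseq_of_isLittleO (isLittleO_countUpTo_not_isSeparated hδ hε hδε),
    1, 1, one_pos, one_pos, fun k hk hk1 lam hlam ζ hζ hζlam ξ hξ ↦ ?_⟩
  have hk0 : 0 < nseq k := one_pos.trans_le hk1
  have hsep := rpow_le_abs_of_isSeparated hδ.le hε hδε.le (nseq_injective.mem_set_image.mp hk)
    hk0 hlam hζ hζlam hξ
  rw [inv_one, one_mul, one_mul, rpow_neg hk0.le, abs_inv]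
  exact ⟨hsep, inv_anti₀ (by positivity) hsep⟩

/-- On a density-one subsequence of `S`, for `λ ∈ (n_k, n_{k+1})` the shifted
lattice points `ξ + ζ`, with `ξ ∈ A(n_k, n_k^δ)` and `0 ≠ |ζ| ≤ λ^ε`, stay at distance
`≳ n_k^δ` from `λ`; equivalently `|c_λ(ξ+ζ)| ≲ n_k^{−δ}`. -/
theorem shifted_annulus_separation :
    ∃ ε δ : ℝ, 0 < ε ∧ δ ∈ Set.Ioo (θH / 2) (1/2 - θH) ∧
    ∃ S' : Set ℝ, S' ⊆ Sset ∧ HasDensityOne S' ∧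
    ∃ C lam0 : ℝ, 0 < C ∧ 0 < lam0 ∧
      ∀ k : ℕ, nseq k ∈ S' → lam0 ≤ nseq k →
      ∀ lam : ℝ, lam ∈ Set.Ioo (nseq k) (nseq (k + 1)) →
      ∀ ζ : Fin 2 → ℤ, ζ ≠ 0 → znorm ζ ≤ lam ^ ε →
      ∀ ξ : Fin 2 → ℤ, |4 * Real.pi ^ 2 * (∑ i, (ξ i : ℝ) ^ 2) - nseq k| ≤ (nseq k) ^ δ →
        C⁻¹ * (nseq k) ^ δ ≤ |4 * Real.pi ^ 2 * (∑ i, ((ξ i + ζ i : ℤ) : ℝ) ^ 2) - lam| ∧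
        |(4 * Real.pi ^ 2 * (∑ i, ((ξ i + ζ i : ℤ) : ℝ) ^ 2) - lam)⁻¹| ≤ C * (nseq k) ^ (-δ) := by
  exact ⟨1 / 100, 17 / 100, by norm_num, by norm_num [θH],
    shifted_annulus_separation_general (by norm_num) (by norm_num) (by norm_num)⟩
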